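/- Let 𝒳₀ ⊆ ℝⁿ be open, 𝒳 ⊆ 𝒳₀, 𝒰 and 𝒴 complete metric spaces, f : 𝒳₀ × 𝒰 → ℝⁿ continuous, and h : 𝒳 → 𝒴 continuous. Let γ ∈ 𝒦∞ and suppose that for each compact U ⊆ 𝒰 there exists a U-decrease function V_U with |h(Z_{V_U})| ≤ γ(|U|). Then for every Lebesgue-measurable precompact ω : [0,∞) → 𝒰 and every locally Lipschitz ξ : [0,∞) → 𝒳 with ξ'(t) = f(ξ(t), ω(t)) for almost every t ≥ 0, the output η := h∘ξ satisfies ‖η‖_aa ≤ γ(‖ω‖_aa); that is, the behavior of the system ẋ = f(x,u), y = h(x) has Cauchy gain γ. -/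

import Mathlib

open Filter Topology MeasureTheory
open scoped ENNReal NNReal

noncomputable def aa {M : Type*} [PseudoMetricSpace M] (ω : ℝ → M) : ℝ≥0∞ :=
  Filter.limsup (fun p : ℝ × ℝ => edist (ω p.1) (ω p.2)) (Filter.atTop ×ˢ Filter.atTop)

def KInfty (γ : ℝ≥0 → ℝ≥0) : Prop :=
  Continuous γ ∧ StrictMono γ ∧ γ 0 = 0 ∧ Filter.Tendsto γ Filter.atTop Filter.atTop

noncomputable def extK (γ : ℝ≥0 → ℝ≥0) : ℝ≥0∞ → ℝ≥0∞ :=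
  fun x => if x = ⊤ then ⊤ else ↑(γ x.toNNReal)

def CauchyGain {U Y : Type*} [PseudoMetricSpace U] [PseudoMetricSpace Y]
    (R : Set ((ℝ → U) × (ℝ → Y))) (γ : ℝ≥0 → ℝ≥0) : Prop :=
  ∀ p ∈ R, aa p.2 ≤ extK γ (aa p.1)

def IncGain {U Y : Type*} [PseudoMetricSpace U] [PseudoMetricSpace Y]
    (R : Set ((ℝ → U) × (ℝ → Y))) (κ : ℝ≥0 → ℝ≥0) : Prop :=
  ∀ p₁ ∈ R, ∀ p₂ ∈ R, ∀ u₁ u₂ : U,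
    Filter.Tendsto p₁.1 Filter.atTop (nhds u₁) → Filter.Tendsto p₂.1 Filter.atTop (nhds u₂) →
    Filter.limsup (fun t => edist (p₁.2 t) (p₂.2 t)) Filter.atTop ≤ ↑(κ (nndist u₁ u₂))

def convTo {U : Type*} [PseudoMetricSpace U] (ω : ℝ → U) (U₀ : Set U) : Prop :=
  ∀ ε > 0, ∃ T : ℝ, 0 ≤ T ∧ ∀ t ≥ T, ∃ u' ∈ U₀, dist (ω t) u' ≤ ε

def omegaLim {U : Type*} [PseudoMetricSpace U] (ω : ℝ → U) : Set U :=
  {u | ∃ t : ℕ → ℝ, Filter.Tendsto t Filter.atTop Filter.atTop ∧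
       Filter.Tendsto (fun i => ω (t i)) Filter.atTop (nhds u)}

def Precomp {U : Type*} [TopologicalSpace U] (ω : ℝ → U) : Prop :=
  ∃ K : Set U, IsCompact K ∧ ∀ t : ℝ, 0 ≤ t → ω t ∈ K

def cascade {U Y Z : Type*} (R : Set ((ℝ → U) × (ℝ → Y))) (S : Set ((ℝ → Y) × (ℝ → Z))) :
    Set ((ℝ → U) × (ℝ → Z)) :=
  {p | ∃ η : ℝ → Y, (p.1, η) ∈ R ∧ (η, p.2) ∈ S}

def CauchyGainOn {U Y : Type*} [PseudoMetricSpace U] [PseudoMetricSpace Y]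
    (R : Set ((ℝ → U) × (ℝ → Y))) (γ : ℝ≥0 → ℝ≥0) (U₀ : Set U) : Prop :=
  ∀ p ∈ R, convTo p.1 U₀ → aa p.2 ≤ extK γ (aa p.1)

def IncGainOn {U Y : Type*} [PseudoMetricSpace U] [PseudoMetricSpace Y]
    (R : Set ((ℝ → U) × (ℝ → Y))) (κ : ℝ≥0 → ℝ≥0) (U₀ : Set U) : Prop :=
  ∀ p₁ ∈ R, ∀ p₂ ∈ R, ∀ u₁ u₂ : U, u₁ ∈ U₀ → u₂ ∈ U₀ →
    Filter.Tendsto p₁.1 Filter.atTop (nhds u₁) → Filter.Tendsto p₂.1 Filter.atTop (nhds u₂) →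
    Filter.limsup (fun t => edist (p₁.2 t) (p₂.2 t)) Filter.atTop ≤ ↑(κ (nndist u₁ u₂))

def ZV {E : Type*} (X : Set E) (V : E → ℝ) : Set E := {x ∈ X | V x = 0}

def UDecrease {E 𝒰 : Type*} [NormedAddCommGroup E] [NormedSpace ℝ E] [PseudoMetricSpace 𝒰]
    (X₀ X : Set E) (f : E → 𝒰 → E) (Uset : Set 𝒰) (V : E → ℝ) : Prop :=
  (∀ x ∈ X, 0 ≤ V x) ∧ ContinuousOn V X ∧
  (∀ a b : ℝ, 0 ≤ a → a ≤ b → IsCompact {x ∈ X | a ≤ V x ∧ V x ≤ b}) ∧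
  (∀ x ∈ X, V x ≠ 0 → ∃ (W : Set E) (Vt : E → ℝ), IsOpen W ∧ x ∈ W ∧ W ⊆ X₀ ∧
    ContDiffOn ℝ 1 Vt W ∧ (∀ z ∈ W ∩ X, Vt z = V z) ∧
    ∀ u ∈ Uset, fderiv ℝ Vt x (f x u) < 0)

/-!
Let `c > ‖ω‖_aa`. After some time `T ≥ 0` the input stays in a compact set `U` of diameter at most
`c`. Each point where `V_U ≠ 0` has a neighborhood in which `V_U` decreases along the trajectory at
a uniform positive rate, so properness gives one rate for each band `{a ≤ V_U ≤ b}` with `0 < a`,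
and `V_U` tends to `0` along the trajectory. By properness again, `ξ` accumulates only on `Z_{V_U}`,
so the amplitude of `h ∘ ξ` is at most `|h(Z_{V_U})| ≤ γ(c)`. Let `c` decrease to `‖ω‖_aa`.
-/

open Set

section RightGrowth

/-- The function `v` grows at rate at most `c` immediately to the right of `t`. This is how
`V ∘ ξ` is shown to decrease: it need not be differentiable, nor locally Lipschitz at the zeros of
`V`. -/
def RightGrowthLE (v : ℝ → ℝ) (c t : ℝ) : Prop :=
  ∀ᶠ z in 𝓝[>] t, v z ≤ v t + c * (z - t)

variable {v : ℝ → ℝ} {a b c d t T : ℝ}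

theorem RightGrowthLE.mono (hv : RightGrowthLE v c t) (hcd : c ≤ d) : RightGrowthLE v d t := by
  filter_upwards [hv, self_mem_nhdsWithin] with z hz htz
  have : c * (z - t) ≤ d * (z - t) := mul_le_mul_of_nonneg_right hcd (sub_pos.2 htz).le
  linarith

theorem le_add_mul_of_rightGrowthLE (hab : a ≤ b) (hv : ContinuousOn v (Icc a b))
    (hc : ∀ t ∈ Ico a b, RightGrowthLE v c t) : v b ≤ v a + c * (b - a) := by
  have hclosed : IsClosed ({t | v t ≤ v a + c * (t - a)} ∩ Icc a b) := by
    rw [inter_comm]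
    exact isClosed_Icc.isClosed_le hv (by fun_prop)
  refine hclosed.Icc_subset_of_forall_mem_nhdsWithin (by simp) ?_ (right_mem_Icc.2 hab)
  rintro t ⟨hta : v t ≤ v a + c * (t - a), ht⟩
  filter_upwards [hc t ht] with z hz
  linarith

theorem antitoneOn_Ici_of_rightGrowthLE_zero {m : ℝ} (hv : ContinuousOn v (Ici T))
    (hm : ∀ t ≥ T, m ≤ v t) (h : ∀ t ≥ T, m < v t → RightGrowthLE v 0 t) :
    AntitoneOn v (Ici T) := by
  intro a ha b _ hab
  -- Strict levels `M > v a` exceed `m`, so `v` cannot leave `{v ≤ M}` through `{v = M}`.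
  refine le_of_forall_gt_imp_ge_of_dense fun M hM => ?_
  have hclosed : IsClosed ({t | v t ≤ M} ∩ Icc a b) := by
    rw [inter_comm]
    exact isClosed_Icc.isClosed_le (hv.mono fun t ht => ha.trans ht.1) continuousOn_const
  refine hclosed.Icc_subset_of_forall_mem_nhdsWithin hM.le ?_ (right_mem_Icc.2 hab)
  rintro t ⟨htM : v t ≤ M, ht⟩
  have htT : T ≤ t := le_trans ha ht.1
  rcases htM.lt_or_eq with hlt | heq
  · have hcont : ContinuousWithinAt v (Ioi t) t := (hv t htT).mono (Ioi_subset_Ici htT)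
    exact (hcont.eventually_lt_const hlt).mono fun _ => le_of_lt
  · filter_upwards [h t htT (heq ▸ (hm a ha).trans_lt hM)] with z hz
    linarith

theorem tendsto_zero_of_rightGrowthLE (hv : ContinuousOn v (Ici T)) (hv₀ : ∀ t ≥ T, 0 ≤ v t)
    (hrate : ∀ a > 0, ∀ b ≥ a, ∃ c < 0, ∀ t ≥ T, v t ∈ Icc a b → RightGrowthLE v c t) :
    Tendsto v atTop (𝓝 0) := by
  have hanti : AntitoneOn v (Ici T) := by
    refine antitoneOn_Ici_of_rightGrowthLE_zero hv hv₀ fun t ht hpos => ?_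
    obtain ⟨c, hc, hrate⟩ := hrate _ hpos _ le_rfl
    exact (hrate t ht ⟨le_rfl, le_rfl⟩).mono hc.le
  suffices hsmall : ∀ a > 0, ∃ t ≥ T, v t < a by
    refine tendsto_order.2 ⟨fun a ha => ?_, fun a ha => ?_⟩
    · filter_upwards [eventually_ge_atTop T] with t ht using ha.trans_le (hv₀ t ht)
    · obtain ⟨s, hs, hsa⟩ := hsmall a ha
      filter_upwards [eventually_ge_atTop s] with t ht
      exact (hanti hs (hs.le.trans ht) ht).trans_lt hsa
  intro a ha
  by_contra! hge
  obtain ⟨c, hc, hrate⟩ := hrate a ha (v T) (hge T le_rfl)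
  have hlin : ∀ t ≥ T, v t ≤ v T + c * (t - T) := fun t ht =>
    le_add_mul_of_rightGrowthLE ht (hv.mono Icc_subset_Ici_self) fun s hs =>
      hrate s hs.1 ⟨hge s hs.1, hanti self_mem_Ici hs.1 hs.1⟩
  have hbot : Tendsto (fun t => v T + c * (t - T)) atTop atBot :=
    tendsto_atBot_add_const_left _ _
      ((tendsto_atTop_add_const_right _ (-T) tendsto_id).const_mul_atTop_of_neg hc)
  obtain ⟨t, hta, htT⟩ := ((hbot.eventually_lt_atBot a).and (eventually_ge_atTop T)).exists
  exact ((hge t htT).trans (hlin t htT)).not_gt hta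

theorem sub_le_mul_of_lipschitzOnWith_of_ae_hasDerivAt_le {K : ℝ≥0} (hab : a ≤ b)
    (hv : LipschitzOnWith K v (Icc a b))
    (hd : ∀ᵐ t : ℝ, t ∈ Icc a b → ∃ d ≤ c, HasDerivAt v d t) :
    v b - v a ≤ c * (b - a) := by
  have hac : AbsolutelyContinuousOnInterval v a b :=
    LipschitzOnWith.absolutelyContinuousOnInterval (by rwa [uIcc_of_le hab])
  have hderiv : ∀ᵐ t ∂volume.restrict (Icc a b), deriv v t ≤ c := by
    refine (ae_restrict_iff' measurableSet_Icc).2 (hd.mono fun t ht htI => ?_)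
    obtain ⟨d, hdc, hd⟩ := ht htI
    exact hd.deriv.trans_le hdc
  calc v b - v a = ∫ t in a..b, deriv v t := hac.integral_deriv_eq_sub.symm
    _ ≤ ∫ _ in a..b, c := intervalIntegral.integral_mono_ae_restrict hab
        hac.intervalIntegrable_deriv intervalIntegrable_const hderiv
    _ = c * (b - a) := by rw [intervalIntegral.integral_const, smul_eq_mul, mul_comm]

theorem rightGrowthLE_of_lipschitzOnWith_of_ae_hasDerivAt_le {K : ℝ≥0} {S : Set ℝ}
    (hS : S ∈ 𝓝[≥] t) (hv : LipschitzOnWith K v S)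
    (hd : ∀ᵐ s : ℝ, s ∈ S → ∃ d ≤ c, HasDerivAt v d s) : RightGrowthLE v c t := by
  obtain ⟨r, hr, hrS⟩ := mem_nhdsGE_iff_exists_Icc_subset.1 hS
  filter_upwards [Ioo_mem_nhdsGT hr] with z hz
  have hzS : Icc t z ⊆ S := (Icc_subset_Icc_right hz.2.le).trans hrS
  have := sub_le_mul_of_lipschitzOnWith_of_ae_hasDerivAt_le hz.1.le (hv.mono hzS)
    (hd.mono fun s hs hsI => hs (hzS hsI))
  linarith

end RightGrowth

section AsymptoticAmplitude

variable {M : Type*} [PseudoMetricSpace M] {ω : ℝ → M} {c : ℝ≥0∞}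

theorem eventually_ediam_image_Ici_le_of_aa_lt (hc : aa ω < c) :
    ∀ᶠ T in atTop, Metric.ediam (ω '' Ici T) ≤ c := by
  have hlt : ∀ᶠ p : ℝ × ℝ in atTop, edist (ω p.1) (ω p.2) < c :=
    prod_atTop_atTop_eq (α := ℝ) (β := ℝ) ▸ eventually_lt_of_limsup_lt hc
  obtain ⟨T₀, hT₀⟩ := eventually_atTop_prod_self'.1 hlt
  filter_upwards [eventually_ge_atTop T₀] with T hT
  refine Metric.ediam_le ?_
  rintro _ ⟨s, hs, rfl⟩ _ ⟨t, ht, rfl⟩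
  exact (hT₀ s (hT.trans hs) t (hT.trans ht)).le

theorem aa_le_ediam_of_forall_ultrafilter {S : Set M}
    (hS : ∀ u : Ultrafilter ℝ, ↑u ≤ (atTop : Filter ℝ) → ∃ y ∈ S, Tendsto ω u (𝓝 y)) :
    aa ω ≤ Metric.ediam S := by
  refine le_of_forall_gt_imp_ge_of_dense fun c hc => ?_
  refine limsup_le_of_le (by isBoundedDefault) (mem_iff_ultrafilter.2 fun u hu => ?_)
  obtain ⟨x, hx, hxlim⟩ := hS (u.map Prod.fst) (tendsto_fst.mono_left hu)
  obtain ⟨y, hy, hylim⟩ := hS (u.map Prod.snd) (tendsto_snd.mono_left hu)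
  have hlim : Tendsto (fun p : ℝ × ℝ => edist (ω p.1) (ω p.2)) u (𝓝 (edist x y)) :=
    Filter.Tendsto.edist hxlim hylim
  exact hlim.eventually_le_const ((Metric.edist_le_ediam_of_mem hx hy).trans_lt hc)

end AsymptoticAmplitude

theorem extK_coe (γ : ℝ≥0 → ℝ≥0) (r : ℝ≥0) : extK γ r = γ r := by
  simp only [extK, ENNReal.coe_ne_top, if_false, ENNReal.toNNReal_coe]

theorem monotone_extK {γ : ℝ≥0 → ℝ≥0} (hγ : Monotone γ) : Monotone (extK γ) := by
  intro x y hxy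
  rcases eq_or_ne y ⊤ with rfl | hy
  · exact le_top.trans_eq (if_pos rfl).symm
  lift y to ℝ≥0 using hy
  lift x to ℝ≥0 using ne_top_of_le_ne_top ENNReal.coe_ne_top hxy
  rw [extK_coe, extK_coe]
  exact_mod_cast hγ (ENNReal.coe_le_coe.1 hxy)

theorem le_extK_of_forall_gt {γ : ℝ≥0 → ℝ≥0} (hγ : Continuous γ) {x y : ℝ≥0∞}
    (h : ∀ c : ℝ≥0, x < c → y ≤ extK γ c) : y ≤ extK γ x := by
  rcases eq_or_ne x ⊤ with rfl | hx
  · exact le_top.trans_eq (if_pos rfl).symm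
  lift x to ℝ≥0 using hx
  have hlim : Tendsto (fun c : ℝ≥0 => (γ c : ℝ≥0∞)) (𝓝[>] x) (𝓝 (γ x)) :=
    ENNReal.tendsto_coe.2 ((hγ.tendsto x).mono_left nhdsWithin_le_nhds)
  rw [extK_coe]
  refine ge_of_tendsto hlim (eventually_mem_nhdsWithin.mono fun c hc => ?_)
  exact extK_coe γ c ▸ h c (ENNReal.coe_lt_coe.2 hc)

theorem exists_lt_eventually_forall_le_of_isCompact {E 𝒰 α : Type*} [TopologicalSpace E]
    [TopologicalSpace 𝒰] [TopologicalSpace α] [LinearOrder α] [OrderTopology α]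
    [DenselyOrdered α] [NoMinOrder α] {φ : E × 𝒰 → α} {U : Set 𝒰} {x : E} {c : α} (hU : IsCompact U)
    (hφ : ∀ u ∈ U, ContinuousAt φ (x, u)) (hlt : ∀ u ∈ U, φ (x, u) < c) :
    ∃ c' < c, ∀ᶠ y in 𝓝 x, ∀ u ∈ U, φ (y, u) ≤ c' := by
  have hφx : ContinuousOn (fun u => φ (x, u)) U := fun u hu =>
    (ContinuousAt.comp (f := fun u => (x, u)) (hφ u hu) (by fun_prop)).continuousWithinAt
  obtain ⟨a, hac, ha⟩ : ∃ a, a < c ∧ ∀ u ∈ U, φ (x, u) ≤ a :=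
    hU.exists_forall_le' (α := αᵒᵈ) hφx hlt
  obtain ⟨c', hac', hc'⟩ := exists_between hac
  refine ⟨c', hc', hU.eventually_forall_of_forall_eventually fun u hu => ?_⟩
  exact ((hφ u hu).eventually_lt_const ((ha u hu).trans_lt hac')).mono fun _ => le_of_lt

section Trajectory

variable {E 𝒰 : Type*} [NormedAddCommGroup E] [NormedSpace ℝ E]

/-- The curve `ξ` is, from time `T` on, a trajectory in `X` of the system `ẋ = f(x, u)` with input
`ω`. The initial time is a parameter because the proof discards initial segments. -/
structure IsTrajectory (X : Set E) (f : E → 𝒰 → E) (ω : ℝ → 𝒰) (ξ : ℝ → E) (T : ℝ) : Prop where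
  locallyLipschitzOn : LocallyLipschitzOn (Ici T) ξ
  mem : ∀ t ≥ T, ξ t ∈ X
  ae_hasDerivAt : ∀ᵐ t : ℝ, T ≤ t → HasDerivAt ξ (f (ξ t) (ω t)) t

variable {X₀ X : Set E} {f : E → 𝒰 → E} {U : Set 𝒰} {V : E → ℝ} {ω : ℝ → 𝒰} {ξ : ℝ → E}
  {s t T : ℝ}

namespace IsTrajectory

theorem mono (hξ : IsTrajectory X f ω ξ s) (hst : s ≤ t) : IsTrajectory X f ω ξ t where
  locallyLipschitzOn := hξ.locallyLipschitzOn.mono (Ici_subset_Ici.2 hst)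
  mem r hr := hξ.mem r (hst.trans hr)
  ae_hasDerivAt := hξ.ae_hasDerivAt.mono fun _ hr htr => hr (hst.trans htr)

theorem rightGrowthLE_comp {g : E → ℝ} {N : Set E} {c : ℝ} (hξ : IsTrajectory X f ω ξ T)
    (hω : MapsTo ω (Ici T) U) (hN : IsOpen N) (hg : ContDiffOn ℝ 1 g N)
    (hgc : ∀ y ∈ N, ∀ u ∈ U, fderiv ℝ g y (f y u) ≤ c) (ht : T ≤ t) (htN : ξ t ∈ N) :
    RightGrowthLE (g ∘ ξ) c t := by
  have hgN : ∀ y ∈ N, ContDiffAt ℝ 1 g y := fun y hy => hg.contDiffAt (hN.mem_nhds hy)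
  obtain ⟨K₁, A, hA, hLg⟩ := (hgN _ htN).exists_lipschitzOnWith
  obtain ⟨K₂, B, hB, hLξ⟩ := hξ.locallyLipschitzOn ht
  have hAN : ξ ⁻¹' (A ∩ N) ∈ 𝓝[Ici T] t :=
    hξ.locallyLipschitzOn.continuousOn t ht (inter_mem hA (hN.mem_nhds htN))
  have hS : Ici T ∩ (B ∩ ξ ⁻¹' (A ∩ N)) ∈ 𝓝[≥] t :=
    nhdsWithin_mono t (Ici_subset_Ici.2 ht)
      (inter_mem self_mem_nhdsWithin (inter_mem hB hAN))
  refine rightGrowthLE_of_lipschitzOnWith_of_ae_hasDerivAt_le hS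
    (hLg.comp (hLξ.mono fun s hs => hs.2.1) fun s hs => hs.2.2.1) ?_
  filter_upwards [hξ.ae_hasDerivAt] with s hs ⟨hTs, _, _, hsN⟩
  exact ⟨_, hgc _ hsN _ (hω hTs),
    ((hgN _ hsN).differentiableAt one_ne_zero).hasFDerivAt.comp_hasDerivAt s (hs hTs)⟩

end IsTrajectory

namespace UDecrease

variable [PseudoMetricSpace 𝒰]

theorem exists_extension_fderiv_le (hV : UDecrease X₀ X f U V) (hU : IsCompact U)
    (hf : ContinuousOn (fun p : E × 𝒰 => f p.1 p.2) (X₀ ×ˢ univ)) {x : E} (hx : x ∈ X)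
    (hVx : V x ≠ 0) :
    ∃ (N : Set E) (g : E → ℝ), IsOpen N ∧ x ∈ N ∧ ContDiffOn ℝ 1 g N ∧ EqOn g V (N ∩ X) ∧
      ∃ c < 0, ∀ y ∈ N, ∀ u ∈ U, fderiv ℝ g y (f y u) ≤ c := by
  obtain ⟨-, -, -, hdecr⟩ := hV
  obtain ⟨W, g, hW, hxW, hWX, hg, hgV, hneg⟩ := hdecr x hx hVx
  have hcont : ContinuousOn (fun p : E × 𝒰 => fderiv ℝ g p.1 (f p.1 p.2)) (W ×ˢ univ) :=
    ((hg.continuousOn_fderiv_of_isOpen hW le_rfl).comp continuousOn_fst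
      fun p hp => hp.1).clm_apply (hf.mono (prod_mono_left hWX))
  obtain ⟨c, hc, hev⟩ := exists_lt_eventually_forall_le_of_isCompact hU
    (fun u _ => hcont.continuousAt ((hW.prod isOpen_univ).mem_nhds ⟨hxW, mem_univ u⟩)) hneg
  obtain ⟨N, hN, hNo, hxN⟩ := eventually_nhds_iff.1 (hev.and (hW.mem_nhds hxW))
  have hNW : N ⊆ W := fun y hy => (hN y hy).2
  exact ⟨N, g, hNo, hxN, hg.mono hNW, fun y hy => hgV y ⟨hNW hy.1, hy.2⟩, c, hc,
    fun y hy => (hN y hy).1⟩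

theorem exists_nhds_rightGrowthLE_comp (hV : UDecrease X₀ X f U V) (hU : IsCompact U)
    (hf : ContinuousOn (fun p : E × 𝒰 => f p.1 p.2) (X₀ ×ˢ univ))
    (hξ : IsTrajectory X f ω ξ T) (hω : MapsTo ω (Ici T) U) {x : E} (hx : x ∈ X)
    (hVx : V x ≠ 0) :
    ∃ N ∈ 𝓝 x, ∃ c < 0, ∀ t ≥ T, ξ t ∈ N → RightGrowthLE (V ∘ ξ) c t := by
  obtain ⟨N, g, hN, hxN, hg, hgV, c, hc, hgc⟩ := hV.exists_extension_fderiv_le hU hf hx hVx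
  refine ⟨N, hN.mem_nhds hxN, c, hc, fun t ht htN => ?_⟩
  have hξt : ContinuousWithinAt ξ (Ioi t) t :=
    (hξ.locallyLipschitzOn.continuousOn t ht).mono (Ioi_subset_Ici ht)
  filter_upwards [hξ.rightGrowthLE_comp hω hN hg hgc ht htN, hξt (hN.mem_nhds htN),
    self_mem_nhdsWithin] with z hz hzN htz
  have hVz : g (ξ z) = V (ξ z) := hgV ⟨hzN, hξ.mem z (ht.le.trans (le_of_lt htz))⟩
  have hVt : g (ξ t) = V (ξ t) := hgV ⟨htN, hξ.mem t ht⟩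
  simpa only [Function.comp_apply, hVz, hVt] using hz

theorem exists_rightGrowthLE_comp_of_isCompact (hV : UDecrease X₀ X f U V) (hU : IsCompact U)
    (hf : ContinuousOn (fun p : E × 𝒰 => f p.1 p.2) (X₀ ×ˢ univ))
    (hξ : IsTrajectory X f ω ξ T) (hω : MapsTo ω (Ici T) U) {K : Set E} (hK : IsCompact K)
    (hKX : K ⊆ X) (hVK : ∀ x ∈ K, V x ≠ 0) :
    ∃ c < 0, ∀ t ≥ T, ξ t ∈ K → RightGrowthLE (V ∘ ξ) c t := by
  refine hK.induction_on (p := fun S => ∃ c < 0, ∀ t ≥ T, ξ t ∈ S → RightGrowthLE (V ∘ ξ) c t)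
    ⟨-1, neg_one_lt_zero, by simp⟩ ?_ ?_ fun x hx => ?_
  · rintro A B hAB ⟨c, hc, hB⟩
    exact ⟨c, hc, fun t ht htA => hB t ht (hAB htA)⟩
  · rintro A B ⟨c, hc, hA⟩ ⟨d, hd, hB⟩
    refine ⟨max c d, max_lt hc hd, fun t ht htAB => ?_⟩
    exact htAB.elim (fun htA => (hA t ht htA).mono (le_max_left c d))
      fun htB => (hB t ht htB).mono (le_max_right c d)
  · obtain ⟨N, hN, hrate⟩ := hV.exists_nhds_rightGrowthLE_comp hU hf hξ hω (hKX hx) (hVK x hx)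
    exact ⟨N, mem_nhdsWithin_of_mem_nhds hN, hrate⟩

theorem tendsto_comp_zero (hV : UDecrease X₀ X f U V) (hU : IsCompact U)
    (hf : ContinuousOn (fun p : E × 𝒰 => f p.1 p.2) (X₀ ×ˢ univ))
    (hξ : IsTrajectory X f ω ξ T) (hω : MapsTo ω (Ici T) U) :
    Tendsto (V ∘ ξ) atTop (𝓝 0) := by
  have ⟨hnonneg, hcont, hproper, _⟩ := hV
  refine tendsto_zero_of_rightGrowthLE (hcont.comp hξ.locallyLipschitzOn.continuousOn hξ.mem)
    (fun t ht => hnonneg _ (hξ.mem t ht)) fun a ha b hab => ?_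
  obtain ⟨c, hc, hrate⟩ := hV.exists_rightGrowthLE_comp_of_isCompact hU hf hξ hω
    (hproper a b ha.le hab) (fun x hx => hx.1) fun x hx => (ha.trans_le hx.2.1).ne'
  exact ⟨c, hc, fun t ht htV => hrate t ht ⟨hξ.mem t ht, htV⟩⟩

theorem exists_mem_ZV_tendsto {α : Type*} {u : Ultrafilter α} {ζ : α → E}
    (hV : UDecrease X₀ X f U V) (hζ : ∀ᶠ t in (u : Filter α), ζ t ∈ X)
    (hlim : Tendsto (V ∘ ζ) u (𝓝 0)) : ∃ x ∈ ZV X V, Tendsto ζ u (𝓝[X] x) := by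
  obtain ⟨hnonneg, hcont, hproper, -⟩ := hV
  have hmem : ∀ᶠ t in (u : Filter α), ζ t ∈ {x ∈ X | 0 ≤ V x ∧ V x ≤ 1} := by
    filter_upwards [hζ, hlim.eventually_le_const one_pos] with t ht ht1
    exact ⟨ht, hnonneg _ ht, ht1⟩
  obtain ⟨x, hx, hux⟩ := (hproper 0 1 le_rfl zero_le_one).ultrafilter_le_nhds (u.map ζ)
    (le_principal_iff.2 hmem)
  have hwithin : Tendsto ζ u (𝓝[X] x) := tendsto_nhdsWithin_iff.2 ⟨hux, hζ⟩
  exact ⟨x, ⟨hx.1, tendsto_nhds_unique ((hcont x hx.1).tendsto.comp hwithin) hlim⟩, hwithin⟩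

theorem aa_comp_le {𝒴 : Type*} [PseudoMetricSpace 𝒴] {h : E → 𝒴} (hV : UDecrease X₀ X f U V)
    (hU : IsCompact U) (hf : ContinuousOn (fun p : E × 𝒰 => f p.1 p.2) (X₀ ×ˢ univ))
    (hh : ContinuousOn h X) (hξ : IsTrajectory X f ω ξ T) (hω : MapsTo ω (Ici T) U) :
    aa (h ∘ ξ) ≤ Metric.ediam (h '' ZV X V) := by
  refine aa_le_ediam_of_forall_ultrafilter fun u hu => ?_
  obtain ⟨x, hx, hux⟩ := hV.exists_mem_ZV_tendsto
    (hu ((eventually_ge_atTop T).mono hξ.mem))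
    ((hV.tendsto_comp_zero hU hf hξ hω).mono_left hu)
  exact ⟨h x, mem_image_of_mem h hx, (hh x hx.1).tendsto.comp hux⟩

end UDecrease

end Trajectory

theorem stmt16_general {E 𝒰 𝒴 : Type*} [NormedAddCommGroup E] [NormedSpace ℝ E]
    [PseudoMetricSpace 𝒰] [PseudoMetricSpace 𝒴] {X₀ X : Set E} {f : E → 𝒰 → E}
    (hf : ContinuousOn (fun p : E × 𝒰 => f p.1 p.2) (X₀ ×ˢ univ))
    {h : E → 𝒴} (hh : ContinuousOn h X) {γ : ℝ≥0 → ℝ≥0} (hγ : Continuous γ) (hγm : Monotone γ)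
    (hV : ∀ U : Set 𝒰, IsCompact U → ∃ V : E → ℝ, UDecrease X₀ X f U V ∧
      Metric.ediam (h '' ZV X V) ≤ extK γ (Metric.ediam U))
    {ω : ℝ → 𝒰} (hω : Precomp ω) {ξ : ℝ → E} (hξ : IsTrajectory X f ω ξ 0) :
    aa (h ∘ ξ) ≤ extK γ (aa ω) := by
  obtain ⟨K, hK, hωK⟩ := hω
  refine le_extK_of_forall_gt hγ fun c hc => ?_
  obtain ⟨T, hdiam, hT⟩ :=
    ((eventually_ediam_image_Ici_le_of_aa_lt hc).and (eventually_ge_atTop 0)).exists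
  have hcpt : IsCompact (closure (ω '' Ici T)) :=
    hK.closure_of_subset (image_subset_iff.2 fun t ht => hωK t (hT.trans ht))
  obtain ⟨V, hV, hZ⟩ := hV _ hcpt
  calc aa (h ∘ ξ) ≤ Metric.ediam (h '' ZV X V) :=
        hV.aa_comp_le hcpt hf hh (hξ.mono hT) fun _ ht => subset_closure (mem_image_of_mem ω ht)
    _ ≤ extK γ (Metric.ediam (closure (ω '' Ici T))) := hZ
    _ ≤ extK γ c := monotone_extK hγm ((Metric.ediam_closure _).trans_le hdiam)

/-- Theorem 1, Cauchy gain part: the behavior of `ẋ = f(x,u)`,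
`y = h(x)` has Cauchy gain γ. -/
theorem stmt16 {n : ℕ} {𝒰 𝒴 : Type*} [MetricSpace 𝒰] [CompleteSpace 𝒰]
    [MeasurableSpace 𝒰] [BorelSpace 𝒰] [MetricSpace 𝒴] [CompleteSpace 𝒴]
    (X₀ X : Set (Fin n → ℝ)) (hX₀ : IsOpen X₀) (hXsub : X ⊆ X₀)
    (f : (Fin n → ℝ) → 𝒰 → (Fin n → ℝ))
    (hf : ContinuousOn (fun p : (Fin n → ℝ) × 𝒰 => f p.1 p.2) (X₀ ×ˢ (Set.univ : Set 𝒰)))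
    (h : (Fin n → ℝ) → 𝒴) (hh : ContinuousOn h X)
    (γ : ℝ≥0 → ℝ≥0) (hγ : KInfty γ)
    (VU : Set 𝒰 → ((Fin n → ℝ) → ℝ))
    (hVU : ∀ U : Set 𝒰, IsCompact U → UDecrease X₀ X f U (VU U) ∧
      EMetric.diam (h '' ZV X (VU U)) ≤ extK γ (EMetric.diam U)) :
    ∀ ω : ℝ → 𝒰, Measurable ω → Precomp ω →
    ∀ ξ : ℝ → (Fin n → ℝ), LocallyLipschitz ξ → (∀ t : ℝ, 0 ≤ t → ξ t ∈ X) →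
    (∀ᵐ t : ℝ ∂volume, 0 ≤ t → HasDerivAt ξ (f (ξ t) (ω t)) t) →
    aa (fun t => h (ξ t)) ≤ extK γ (aa ω) := by
  intro ω _ hω ξ hξ hξX hd
  exact stmt16_general hf hh hγ.1 hγ.2.1.monotone (fun U hU => ⟨VU U, hVU U hU⟩) hω
    ⟨hξ.locallyLipschitzOn, hξX, hd⟩
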